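/- arXiv:2412.18875 — 2 statements merged into one kernel-verified Lean document; each statement's English description precedes it below -/
import Mathlib

section
/- For every classification π, the economy E(π) admits a competitive equilibrium ⟨p,(x^i)⟩. -/
open MeasureTheory Set
open scoped ENNReal NNReal symmDiff

noncomputable section

/-- A classification: a finite partition of `[0,1]` into intervals of positive measure. -/
structure Classification (ω : Measure ℝ) where
  parts : Finset (Set ℝ)
  isInterval : ∀ C ∈ parts, C.OrdConnected
  posMeas : ∀ C ∈ parts, 0 < ω C
  pairwiseDisj : (parts : Set (Set ℝ)).PairwiseDisjoint id
  cover : ⋃₀ (parts : Set (Set ℝ)) = Set.Icc (0 : ℝ) 1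

/-- The (finite) algebra of subsets generated by a classification. -/
def sigmaAlg {ω : Measure ℝ} (π : Classification ω) : Set (Set ℝ) :=
  {B | ∃ S : Finset (Set ℝ), S ⊆ π.parts ∧ B = ⋃₀ (S : Set (Set ℝ))}

/-- `δ_ω(π,π') = sup_{C ∈ σ(π)} inf_{C' ∈ σ(π')} ω (C △ C')`. -/
def deltaOmega (ω : Measure ℝ) (π π' : Classification ω) : ℝ≥0∞ :=
  ⨆ C ∈ sigmaAlg π, ⨅ C' ∈ sigmaAlg π', ω (C ∆ C')

/-- The pseudometric `d_ω`. -/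
def dOmega (ω : Measure ℝ) (π π' : Classification ω) : ℝ≥0∞ :=
  max (deltaOmega ω π π') (deltaOmega ω π' π)

/-- The simple function `∑_{C ∈ π} (x_C / ω(C)) 𝟙_C`, as an element of `L¹(ω)`. -/
noncomputable def tradable (ω : Measure ℝ) [IsFiniteMeasure ω] (π : Classification ω)
    (x : Set ℝ → ℝ) : Lp ℝ 1 ω :=
  ∑ C ∈ π.parts.attach,
    indicatorConstLp 1 ((π.isInterval C.1 C.2).measurableSet) (measure_ne_top ω C.1)
      (x C.1 / (ω C.1).toReal)

/-- Utility of a tradable bundle: `V(π,x) = U (∑_C (x_C/ω(C)) 𝟙_C)`. -/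
noncomputable def V (ω : Measure ℝ) [IsFiniteMeasure ω] (U : Lp ℝ 1 ω → ℝ)
    (π : Classification ω) (x : Set ℝ → ℝ) : ℝ :=
  U (tradable ω π x)

/-- The positive cone `L¹(ω)₊`. -/
def PosCone (ω : Measure ℝ) : Set (Lp ℝ 1 ω) :=
  {f | ∀ᵐ t ∂ω, 0 ≤ f t}

/-- `U` is a utility function on `L¹(ω)₊`: concave, norm-continuous and monotone. -/
def IsUtility (ω : Measure ℝ) (U : Lp ℝ 1 ω → ℝ) : Prop :=
  ContinuousOn U (PosCone ω) ∧ ConcaveOn ℝ (PosCone ω) U ∧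
    ∀ f g : Lp ℝ 1 ω, f ∈ PosCone ω → g ∈ PosCone ω →
      (∀ᵐ t ∂ω, g t ≤ f t) → U g ≤ U f

/-- Competitive equilibrium of the economy `E(π)` with claims `κ` and utilities `U`. -/
def IsEquilibrium {n : ℕ} (ω : Measure ℝ) [IsFiniteMeasure ω] (κ : Fin n → ℝ)
    (U : Fin n → Lp ℝ 1 ω → ℝ) (π : Classification ω)
    (p : Set ℝ → ℝ) (x : Fin n → Set ℝ → ℝ) : Prop :=
  (∀ C ∈ π.parts, 0 ≤ p C) ∧
  (∀ i, ∀ C ∈ π.parts, 0 ≤ x i C) ∧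
  (∀ C ∈ π.parts, ∑ i, x i C ≤ (ω C).toReal) ∧
  (∀ i, ∑ C ∈ π.parts, p C * x i C ≤ κ i * ∑ C ∈ π.parts, p C * (ω C).toReal) ∧
  (∀ i, ∀ y : Set ℝ → ℝ, (∀ C ∈ π.parts, 0 ≤ y C) →
    V ω (U i) π (x i) < V ω (U i) π y →
    κ i * ∑ C ∈ π.parts, p C * (ω C).toReal < ∑ C ∈ π.parts, p C * y C)

/-- `(x^i)` is a competitive allocation of `E(π)` if some price supports it. -/
def IsCompetitiveAlloc {n : ℕ} (ω : Measure ℝ) [IsFiniteMeasure ω] (κ : Fin n → ℝ)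
    (U : Fin n → Lp ℝ 1 ω → ℝ) (π : Classification ω)
    (x : Fin n → Set ℝ → ℝ) : Prop :=
  ∃ p : Set ℝ → ℝ, IsEquilibrium ω κ U π p x

/-! Existence of an equilibrium rests on Brouwer's theorem, which comes from the change of variables
formula: if a `C¹` map `f` fixes the boundary of the ball pointwise, then `∫ det (1 + t (f' - 1))`
is polynomial in `t` and, for small `t`, equal to the volume of the ball, because `id + t (f - id)`
is then a bijection of the ball; hence so it is at `t = 1`. For a retraction onto the sphere the
integrand vanishes at `t = 1`, so there is none.

Projecting onto a convex set turns fixed points into solutions of variational inequalities, and on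
the price simplex such a solution is, by Walras' law, a price at which nothing is in excess demand
(Gale–Nikaido–Debreu). To get continuous single-valued demands, consumption is truncated to a box
and `ε x·x` is subtracted from the utilities; compactness lets `ε → 0`, and concavity removes the
box. Bundles over the parts of a classification map linearly into `L¹(ω)`, so `E(π)` is such an
exchange economy. -/

section BrouwerFixedPoint

open Metric Topology Polynomial

lemma nonempty_inter_frontier_of_isPreconnected {X : Type*} [TopologicalSpace X] {s t : Set X}
    (ht : IsPreconnected t) (hts : (t ∩ s).Nonempty) (hts' : (t ∩ sᶜ).Nonempty) :
    (t ∩ frontier s).Nonempty := by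
  by_contra hempty
  have hdisj : ∀ x ∈ t, x ∉ frontier s := fun x hx hxs => hempty ⟨x, hx, hxs⟩
  have hint : ∀ x ∈ t, x ∈ closure s → x ∈ interior s := fun x hx hxs => by
    by_contra hxi
    exact hdisj x hx ⟨hxs, hxi⟩
  obtain ⟨x, hxt, hxs⟩ := hts
  obtain ⟨y, hyt, hys⟩ := hts'
  obtain ⟨z, -, hzi, hzc⟩ := ht (interior s) (closure s)ᶜ isOpen_interior
    isClosed_closure.isOpen_compl (fun z hz => (em (z ∈ closure s)).imp_left (hint z hz))
    ⟨x, hxt, hint x hxt (subset_closure hxs)⟩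
    ⟨y, hyt, fun hyc => hys (interior_subset (hint y hyt hyc))⟩
  exact hzc (interior_subset_closure hzi)

section NormedSpace

variable {E : Type*} [NormedAddCommGroup E] [NormedSpace ℝ E]

lemma lipschitzWith_indicator_of_frontier_eq_zero {F : Type*} [SeminormedAddCommGroup F]
    {g : E → F} {K : ℝ≥0} {s : Set E} (hs : IsClosed s) (hg : LipschitzOnWith K g s)
    (hg0 : ∀ x ∈ frontier s, g x = 0) : LipschitzWith K (s.indicator g) := by
  have hcross : ∀ x ∈ s, ∀ y ∉ s, dist (g x) 0 ≤ K * dist x y := by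
    intro x hx y hy
    obtain ⟨z, hz, hzs⟩ := nonempty_inter_frontier_of_isPreconnected
      (convex_segment (𝕜 := ℝ) x y).isPreconnected ⟨x, left_mem_segment ℝ x y, hx⟩
      ⟨y, right_mem_segment ℝ x y, hy⟩
    calc dist (g x) 0 = dist (g x) (g z) := by rw [hg0 z hzs]
      _ ≤ K * dist x z := hg.dist_le_mul x hx z (hs.frontier_subset hzs)
      _ ≤ K * dist x y := by
        gcongr
        linarith [dist_add_dist_of_mem_segment hz, dist_nonneg (x := z) (y := y)]
  refine LipschitzWith.of_dist_le_mul fun x y => ?_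
  by_cases hx : x ∈ s <;> by_cases hy : y ∈ s <;>
    simp only [indicator_of_mem, indicator_of_notMem, hx, hy, not_false_eq_true]
  · exact hg.dist_le_mul x hx y hy
  · exact hcross x hx y hy
  · rw [dist_comm, dist_comm x]
    exact hcross y hy x hx
  · rw [dist_self]
    positivity

lemma bijOn_of_lipschitzOnWith_sub_id [CompleteSpace E] {f : E → E} {K : ℝ≥0} {s : Set E}
    (hs : IsClosed s) (hK : K < 1) (hf : LipschitzOnWith K (fun x => f x - x) s)
    (hfix : ∀ x ∈ frontier s, f x = x) : BijOn f s s := by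
  -- Extended by the identity, `f` becomes a contractive perturbation of the identity of `E`.
  let F : E → E := fun x => x + s.indicator (fun x => f x - x) x
  have hF : ApproximatesLinearOn F (ContinuousLinearEquiv.refl ℝ E : E →L[ℝ] E) univ K := by
    rw [ApproximatesLinearOn.approximatesLinearOn_iff_lipschitzOnWith, lipschitzOnWith_univ]
    convert! lipschitzWith_indicator_of_frontier_eq_zero hs hf
      fun x hx => sub_eq_zero.2 (hfix x hx) using 1
    ext x
    simp [F]
  have hK' : Subsingleton E ∨
      K < ‖((ContinuousLinearEquiv.refl ℝ E).symm : E →L[ℝ] E)‖₊⁻¹ := by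
    rcases subsingleton_or_nontrivial E with hE | hE
    · exact Or.inl hE
    · refine Or.inr (hK.trans_eq ?_)
      simp [ContinuousLinearEquiv.coe_refl]
  have hFbij : F.Bijective :=
    ⟨injOn_univ.1 (hF.injOn hK'), hF.surjective hK'⟩
  have hFcompl : EqOn F id sᶜ := fun x hx => by simp [F, indicator_of_notMem hx]
  have hFs : EqOn F f s := fun x hx => by simp [F, indicator_of_mem hx]
  have hFsc : BijOn F sᶜ sᶜ := (bijOn_id _).congr hFcompl.symm
  simpa only [compl_compl] using (hFsc.compl hFbij).congr (by rwa [compl_compl])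

lemma exists_polynomial_eval_eq_integral {X : Type*} [MeasurableSpace X] {μ : Measure X} {n : ℕ}
    {P : X → ℝ[X]} (hdeg : ∀ x, (P x).natDegree ≤ n)
    (hint : ∀ t, Integrable (fun x => (P x).eval t) μ) :
    ∃ Q : ℝ[X], ∀ t, Q.eval t = ∫ x, (P x).eval t ∂μ := by
  let B := Lagrange.basis (Finset.range (n + 1)) (Nat.cast : ℕ → ℝ)
  have hP : ∀ x t, (P x).eval t
      = ∑ j ∈ Finset.range (n + 1), (P x).eval (j : ℝ) * (B j).eval t := by
    intro x t
    have hlt : (P x).degree < (Finset.range (n + 1)).card := by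
      rw [Finset.card_range]
      exact degree_le_natDegree.trans_lt (by exact_mod_cast Nat.lt_succ_of_le (hdeg x))
    conv_lhs => rw [Lagrange.eq_interpolate Nat.cast_injective.injOn hlt]
    simp [Lagrange.interpolate_apply, eval_finsetSum, B]
  refine ⟨∑ j ∈ Finset.range (n + 1), C (∫ x, (P x).eval (j : ℝ) ∂μ) * B j, fun t => ?_⟩
  calc (∑ j ∈ Finset.range (n + 1), C (∫ x, (P x).eval (j : ℝ) ∂μ) * B j).eval t
      = ∑ j ∈ Finset.range (n + 1), ∫ x, (P x).eval (j : ℝ) * (B j).eval t ∂μ := by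
        simp [eval_finsetSum, integral_mul_const]
    _ = ∫ x, (P x).eval t ∂μ := by
        simp only [hP _ t]
        exact (integral_finsetSum (Finset.range (n + 1))
          fun j _ => (hint j).mul_const ((B j).eval t)).symm

lemma eventually_det_one_add_pos : ∀ᶠ L : E →L[ℝ] E in 𝓝 0, 0 < (1 + L).det := by
  have hcont : Continuous fun L : E →L[ℝ] E => (1 + L).det :=
    ContinuousLinearMap.continuous_det.comp (continuous_const.add continuous_id)
  exact hcont.continuousAt.eventually (lt_mem_nhds (by simp [ContinuousLinearMap.det]))

variable [FiniteDimensional ℝ E]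

lemma exists_polynomial_eval_eq_det_one_add_smul (A : E →L[ℝ] E) :
    ∃ P : ℝ[X], P.natDegree ≤ Module.finrank ℝ E ∧ ∀ t : ℝ, P.eval t = (1 + t • A).det := by
  let b := Module.finBasis ℝ E
  let M := LinearMap.toMatrix b b (A : E →ₗ[ℝ] E)
  refine ⟨((X : ℝ[X]) • M.map C + (1 : Matrix _ _ ℝ).map C).det, ?_, fun t => ?_⟩
  · simpa using natDegree_det_X_add_C_le M 1
  · have hM : (t • M + 1) = LinearMap.toMatrix b b ((1 + t • A : E →L[ℝ] E) : E →ₗ[ℝ] E) := by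
      simp [M, add_comm]
    rw [ContinuousLinearMap.det, ← LinearMap.det_toMatrix b, ← hM, ← coe_evalRingHom,
      RingHom.map_det]
    congr 1
    ext i j
    by_cases hij : i = j <;> simp [hij] <;> ring

variable [MeasurableSpace E] [BorelSpace E] {s : Set E} {f : E → E} {f' : E → E →L[ℝ] E}

lemma setIntegral_det_eq_measureReal_of_bijOn (μ : Measure E) [μ.IsAddHaarMeasure]
    (hs : MeasurableSet s) (hf : ∀ x ∈ s, HasFDerivWithinAt f (f' x) s x) (hbij : BijOn f s s)
    (hdet : ∀ x ∈ s, 0 ≤ (f' x).det) : ∫ x in s, (f' x).det ∂μ = μ.real s := by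
  calc ∫ x in s, (f' x).det ∂μ = ∫ x in s, |(f' x).det| • (1 : ℝ) ∂μ :=
        setIntegral_congr_fun hs fun x hx => by simp [abs_of_nonneg (hdet x hx)]
    _ = ∫ _ in f '' s, (1 : ℝ) ∂μ :=
        (integral_image_eq_integral_abs_det_fderiv_smul μ hs hf hbij.injOn fun _ => 1).symm
    _ = μ.real s := by simp [hbij.image_eq]

lemma eventually_setIntegral_det_one_add_smul (μ : Measure E) [μ.IsAddHaarMeasure]
    (hs : IsCompact s) (hsc : Convex ℝ s) (hf : ∀ x ∈ s, HasFDerivWithinAt f (f' x) s x)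
    (hf' : ContinuousOn f' s) (hfix : ∀ x ∈ frontier s, f x = x) :
    ∀ᶠ t : ℝ in 𝓝 0, ∫ x in s, (1 + t • (f' x - 1)).det ∂μ = μ.real s := by
  have hA : ContinuousOn (fun x => f' x - 1) s := hf'.sub continuousOn_const
  obtain ⟨K, hK⟩ := hs.bddAbove_image hA.nnnorm
  replace hK : ∀ x ∈ s, ‖f' x - 1‖₊ ≤ K := fun x hx => hK (mem_image_of_mem _ hx)
  have hlip : LipschitzOnWith K (fun x => f x - x) s :=
    hsc.lipschitzOnWith_of_nnnorm_hasFDerivWithin_le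
      (fun x hx => (hf x hx).sub (hasFDerivWithinAt_id x s)) hK
  obtain ⟨δ, hδ, hdet⟩ := Metric.eventually_nhds_iff.1 (eventually_det_one_add_pos (E := E))
  have hcont : Continuous fun t : ℝ => ‖t‖₊ * K := by fun_prop
  have hsmall : ∀ᶠ t : ℝ in 𝓝 0, ‖t‖₊ * K < min 1 δ.toNNReal :=
    hcont.continuousAt.eventually (gt_mem_nhds (by simpa using hδ))
  filter_upwards [hsmall] with t ht
  refine setIntegral_det_eq_measureReal_of_bijOn (f := fun x => x + t • (f x - x)) μ
    hs.measurableSet (fun x hx => ?_) ?_ fun x hx => (hdet ?_).le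
  · exact (hasFDerivWithinAt_id x s).add
      (((hf x hx).sub (hasFDerivWithinAt_id x s)).const_smul t)
  · refine bijOn_of_lipschitzOnWith_sub_id hs.isClosed (ht.trans_le (min_le_left _ _)) ?_
      fun x hx => by simp [hfix x hx]
    simpa using! (lipschitzWith_smul t).comp_lipschitzOnWith hlip
  · have hle : ‖t • (f' x - 1)‖₊ ≤ ‖t‖₊ * K := by
      rw [nnnorm_smul]
      gcongr
      exact hK x hx
    rw [dist_zero_right, ← coe_nnnorm]
    exact Real.lt_toNNReal_iff_coe_lt.1 (hle.trans_lt (ht.trans_le (min_le_right _ _)))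

theorem setIntegral_det_eq_measureReal_of_frontier_fixed (μ : Measure E) [μ.IsAddHaarMeasure]
    (hs : IsCompact s) (hsc : Convex ℝ s) (hf : ∀ x ∈ s, HasFDerivWithinAt f (f' x) s x)
    (hf' : ContinuousOn f' s) (hfix : ∀ x ∈ frontier s, f x = x) :
    ∫ x in s, (f' x).det ∂μ = μ.real s := by
  choose P hPdeg hP using fun x => exists_polynomial_eval_eq_det_one_add_smul (f' x - 1)
  have hint : ∀ t, Integrable (fun x => (P x).eval t) (μ.restrict s) := fun t => by
    simp only [hP]
    exact (ContinuousLinearMap.continuous_det.comp_continuousOn (continuousOn_const.add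
      ((hf'.sub continuousOn_const).const_smul t))).integrableOn_compact hs
  obtain ⟨Q, hQ⟩ := exists_polynomial_eval_eq_integral hPdeg hint
  have hQconst : Q = C (μ.real s) := eq_of_infinite_eval_eq _ _ <| infinite_of_mem_nhds 0 <| by
    filter_upwards [eventually_setIntegral_det_one_add_smul μ hs hsc hf hf' hfix] with t ht
    simp only [hQ, hP, ht, eval_C]
  simpa [hP, hQconst] using (hQ 1).symm

end NormedSpace

section InnerProductSpace

variable {E : Type*} [NormedAddCommGroup E] [InnerProductSpace ℝ E]

lemma real_inner_sub_pos_of_norm_le_one {x y : E} (hx : ‖x‖ = 1) (hy : ‖y‖ ≤ 1) (hne : y ≠ x) :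
    0 < inner ℝ x (x - y) := by
  have hpos : 0 < ‖x - y‖ ^ 2 := by
    have : x - y ≠ 0 := sub_ne_zero.2 hne.symm
    positivity
  rw [norm_sub_sq_real, hx] at hpos
  rw [inner_sub_right, real_inner_self_eq_norm_sq, hx]
  nlinarith [norm_nonneg y]

/-- The parameter `t` at which the ray `t ↦ a + t • u` leaves the unit ball, that is, the larger
root of `‖a + t • u‖ ^ 2 = 1`. It has the junk value `0` when `u = 0`. -/
def exitTime (a u : E) : ℝ :=
  (√(inner ℝ a u ^ 2 + ‖u‖ ^ 2 * (1 - ‖a‖ ^ 2)) - inner ℝ a u) / ‖u‖ ^ 2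

lemma norm_add_exitTime_smul {a u : E} (ha : ‖a‖ ≤ 1) (hu : u ≠ 0) :
    ‖a + exitTime a u • u‖ = 1 := by
  have hu2 : 0 < ‖u‖ ^ 2 := by positivity
  have ha2 : 0 ≤ 1 - ‖a‖ ^ 2 := by nlinarith [norm_nonneg a]
  have hroot : (exitTime a u * ‖u‖ ^ 2 + inner ℝ a u) ^ 2
      = inner ℝ a u ^ 2 + ‖u‖ ^ 2 * (1 - ‖a‖ ^ 2) := by
    rw [exitTime, div_mul_cancel₀ _ hu2.ne', sub_add_cancel, Real.sq_sqrt (by positivity)]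
  refine (sq_eq_sq₀ (norm_nonneg _) zero_le_one).1 (mul_left_cancel₀ hu2.ne' ?_)
  rw [norm_add_sq_real, inner_smul_right, norm_smul, mul_pow, Real.norm_eq_abs, sq_abs]
  linear_combination hroot

lemma exitTime_eq_zero {a u : E} (ha : ‖a‖ = 1) (hau : 0 ≤ inner ℝ a u) : exitTime a u = 0 := by
  simp [exitTime, ha, Real.sqrt_sq hau]

lemma contDiffAt_exitTime {G : Type*} [NormedAddCommGroup G] [NormedSpace ℝ G] {n : WithTop ℕ∞}
    {a u : G → E} {x : G} (ha : ContDiffAt ℝ n a x) (hu : ContDiffAt ℝ n u x)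
    (hax : ‖a x‖ ≤ 1) (hux : u x ≠ 0) (hsphere : ‖a x‖ = 1 → 0 < inner ℝ (a x) (u x)) :
    ContDiffAt ℝ n (fun y => exitTime (a y) (u y)) x := by
  have hu2 : 0 < ‖u x‖ ^ 2 := by positivity
  have hdiscr : 0 < inner ℝ (a x) (u x) ^ 2 + ‖u x‖ ^ 2 * (1 - ‖a x‖ ^ 2) := by
    rcases hax.lt_or_eq with hlt | heq
    · have : 0 < 1 - ‖a x‖ ^ 2 := by nlinarith [norm_nonneg (a x)]
      positivity
    · have := hsphere heq
      rw [heq, one_pow, sub_self, mul_zero, add_zero]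
      positivity
  have hinner : ContDiffAt ℝ n (fun y => inner ℝ (a y) (u y)) x := ha.inner ℝ hu
  exact ((((hinner.pow 2).add ((hu.norm_sq ℝ).mul (contDiffAt_const.sub (ha.norm_sq ℝ)))).sqrt
    hdiscr.ne').sub hinner).div (hu.norm_sq ℝ) hu2.ne'

lemma norm_sub_le_of_inner_le_zero {x y x' y' : E} (hx : inner ℝ (x - x') (y' - x') ≤ 0)
    (hy : inner ℝ (y - y') (x' - y') ≤ 0) : ‖x' - y'‖ ≤ ‖x - y‖ := by
  have hinner : ‖x' - y'‖ ^ 2 ≤ inner ℝ (x - y) (x' - y') := by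
    have hsum : inner ℝ (x - y) (x' - y') - ‖x' - y'‖ ^ 2
        = -(inner ℝ (x - x') (y' - x') + inner ℝ (y - y') (x' - y')) := by
      rw [← real_inner_self_eq_norm_sq, ← neg_sub x' y', inner_neg_right]
      simp only [inner_sub_left]
      ring
    linarith
  nlinarith [real_inner_le_norm (x - y) (x' - y'), norm_nonneg (x - y), norm_nonneg (x' - y')]

lemma exists_lipschitzWith_one_inner_le_zero {K : Set E} (hne : K.Nonempty) (hK : IsComplete K)
    (hKc : Convex ℝ K) : ∃ P : E → E, LipschitzWith 1 P ∧
      ∀ x, P x ∈ K ∧ ∀ y ∈ K, inner ℝ (x - P x) (y - P x) ≤ 0 := by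
  have hproj : ∀ x, ∃ z ∈ K, ∀ y ∈ K, inner ℝ (x - z) (y - z) ≤ 0 := fun x => by
    obtain ⟨z, hz, hmin⟩ := exists_norm_eq_iInf_of_complete_convex hne hK hKc x
    exact ⟨z, hz, (norm_eq_iInf_iff_real_inner_le_zero hKc hz).1 hmin⟩
  choose P hPK hP using hproj
  refine ⟨P, LipschitzWith.of_dist_le_mul fun x y => ?_, fun x => ⟨hPK x, hP x⟩⟩
  simpa only [dist_eq_norm, NNReal.coe_one, one_mul] using
    norm_sub_le_of_inner_le_zero (hP x _ (hPK y)) (hP y _ (hPK x))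

variable [FiniteDimensional ℝ E]

lemma det_eq_zero_of_norm_eq_one {s : Set E} {f : E → E} {L : E →L[ℝ] E} {x : E}
    (hs : UniqueDiffWithinAt ℝ s x) (hx : x ∈ s) (hf : HasFDerivWithinAt f L s x)
    (hnorm : ∀ y ∈ s, ‖f y‖ = 1) : L.det = 0 := by
  by_contra hdet
  obtain ⟨w, hw⟩ := (L.toContinuousLinearEquivOfDetNeZero hdet).surjective (f x)
  have hconst : HasFDerivWithinAt (fun y => inner ℝ (f y) (f y)) (0 : E →L[ℝ] ℝ) s x :=
    (hasFDerivWithinAt_const (1 : ℝ) x s).congr'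
      (fun y hy => by rw [real_inner_self_eq_norm_sq, hnorm y hy, one_pow]) hx
  have hzero := congrArg (fun A => A w) (hs.eq (hf.inner ℝ hf) hconst)
  simp [show L w = f x from hw, hnorm x hx] at hzero

theorem not_forall_norm_eq_one_of_fixes_sphere {f : E → E}
    (hf : ContDiffOn ℝ 1 f (closedBall 0 1)) (hfix : ∀ x ∈ sphere (0 : E) 1, f x = x) :
    ¬ ∀ x ∈ closedBall (0 : E) 1, ‖f x‖ = 1 := by
  intro hnorm
  borelize E
  have huniq : UniqueDiffOn ℝ (closedBall (0 : E) 1) :=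
    uniqueDiffOn_convex (convex_closedBall 0 1) <|
      ⟨0, ball_subset_interior_closedBall (mem_ball_self one_pos)⟩
  have hderiv : ∀ x ∈ closedBall (0 : E) 1,
      HasFDerivWithinAt f (fderivWithin ℝ f (closedBall 0 1) x) (closedBall 0 1) x :=
    fun x hx => (hf.differentiableOn one_ne_zero x hx).hasFDerivWithinAt
  have hvol := setIntegral_det_eq_measureReal_of_frontier_fixed volume
    (isCompact_closedBall 0 1) (convex_closedBall 0 1) hderiv
    (hf.continuousOn_fderivWithin huniq le_rfl)
    fun x hx => hfix x (frontier_closedBall_subset_sphere hx)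
  rw [setIntegral_eq_zero_of_forall_eq_zero fun x hx =>
    det_eq_zero_of_norm_eq_one (huniq x hx) hx (hderiv x hx) hnorm] at hvol
  exact (ENNReal.toReal_pos (measure_closedBall_pos volume (0 : E) one_pos).ne'
    measure_closedBall_lt_top.ne).ne hvol

-- Otherwise sending `x` to the exit point of the ray from `f x` through `x` is a retraction.
lemma exists_isFixedPt_of_contDiff {f : E → E} (hf : ContDiff ℝ 1 f) (hf1 : ∀ x, ‖f x‖ ≤ 1) :
    ∃ x ∈ closedBall (0 : E) 1, Function.IsFixedPt f x := by
  by_contra! hne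
  have hu : ContDiff ℝ 1 fun x => x - f x := contDiff_id.sub hf
  have hu0 : ∀ x ∈ closedBall (0 : E) 1, x - f x ≠ 0 := fun x hx =>
    sub_ne_zero.2 (Ne.symm (hne x hx))
  have hsphere : ∀ x : E, ‖x‖ = 1 → 0 < inner ℝ x (x - f x) := fun x hx =>
    real_inner_sub_pos_of_norm_le_one hx (hf1 x) (hne x (by simp [hx]))
  refine not_forall_norm_eq_one_of_fixes_sphere
    (f := fun x => x + exitTime x (x - f x) • (x - f x)) (fun x hx => ?_) (fun x hx => ?_)
    fun x hx => norm_add_exitTime_smul (mem_closedBall_zero_iff.1 hx) (hu0 x hx)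
  · exact (contDiffAt_id.add ((contDiffAt_exitTime contDiffAt_id hu.contDiffAt
      (mem_closedBall_zero_iff.1 hx) (hu0 x hx) (hsphere x)).smul hu.contDiffAt)).contDiffWithinAt
  · have hx1 := mem_sphere_zero_iff_norm.1 hx
    rw [exitTime_eq_zero hx1 (hsphere x hx1).le, zero_smul, add_zero]

lemma exists_norm_sub_le_of_continuous {f : E → E} (hf : Continuous f) (hf1 : ∀ x, ‖f x‖ ≤ 1)
    {ε : ℝ} (hε : 0 < ε) : ∃ x ∈ closedBall (0 : E) 1, ‖f x - x‖ ≤ ε := by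
  have hε2 : 0 < ε / 2 := half_pos hε
  obtain ⟨g, hg, hgf, -⟩ := hf.exists_contDiff_approx 1 (ε := fun _ => ε / 2) continuous_const
    fun _ => hε2
  have hg1 : ∀ x, ‖g x‖ ≤ 1 + ε / 2 := fun x => by
    have hclose := (hgf x).le
    rw [dist_eq_norm] at hclose
    linarith [norm_le_norm_add_norm_sub' (g x) (f x), hf1 x]
  obtain ⟨x, hx, hfix⟩ := exists_isFixedPt_of_contDiff (f := fun x => (1 + ε / 2)⁻¹ • g x)
    (contDiff_const.smul hg) fun x => by
      rw [norm_smul, Real.norm_of_nonneg (by positivity), inv_mul_le_iff₀ (by positivity), mul_one]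
      exact hg1 x
  have hgx : g x = (1 + ε / 2) • x := (inv_smul_eq_iff₀ (by positivity)).1 hfix
  refine ⟨x, hx, ?_⟩
  calc ‖f x - x‖ = ‖(f x - g x) + (ε / 2) • x‖ := by rw [hgx]; congr 1; module
    _ ≤ ‖f x - g x‖ + ‖(ε / 2) • x‖ := norm_add_le _ _
    _ ≤ ε / 2 + ε / 2 * 1 := by
      rw [norm_smul, Real.norm_of_nonneg hε2.le, ← dist_eq_norm, dist_comm]
      gcongr
      · exact (hgf x).le
      · exact mem_closedBall_zero_iff.1 hx
    _ = ε := by ring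

lemma exists_isFixedPt_of_norm_le_one {f : E → E} (hf : Continuous f) (hf1 : ∀ x, ‖f x‖ ≤ 1) :
    ∃ x, Function.IsFixedPt f x := by
  obtain ⟨x, -, hmin⟩ := (isCompact_closedBall (0 : E) 1).exists_isMinOn
    ⟨0, by simp⟩ ((hf.sub continuous_id).norm.continuousOn)
  refine ⟨x, sub_eq_zero.1 (norm_le_zero_iff.1 (le_of_forall_pos_le_add fun ε hε => ?_))⟩
  obtain ⟨y, hy, hyε⟩ := exists_norm_sub_le_of_continuous hf hf1 hε
  simpa using (hmin hy).trans hyε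

lemma exists_isFixedPt_of_isBounded_range {f : E → E} (hf : Continuous f)
    (hb : Bornology.IsBounded (range f)) : ∃ x, Function.IsFixedPt f x := by
  obtain ⟨R, hR, hfR⟩ := hb.exists_pos_norm_le
  obtain ⟨x, hx⟩ := exists_isFixedPt_of_norm_le_one (f := fun x => R⁻¹ • f (R • x))
    ((hf.comp (continuous_const_smul R)).const_smul _) fun x => by
      rw [norm_smul, Real.norm_of_nonneg (by positivity), inv_mul_le_iff₀ hR, mul_one]
      exact hfR _ (mem_range_self _)
  exact ⟨R • x, (inv_smul_eq_iff₀ hR.ne').1 hx⟩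

theorem exists_isFixedPt_of_isCompact_convex {K : Set E} {f : E → E} (hne : K.Nonempty)
    (hK : IsCompact K) (hKc : Convex ℝ K) (hf : ContinuousOn f K) (hmaps : MapsTo f K K) :
    ∃ x ∈ K, Function.IsFixedPt f x := by
  obtain ⟨P, hP, hPK⟩ := exists_lipschitzWith_one_inner_le_zero hne hK.isComplete hKc
  have hfP : ∀ x, f (P x) ∈ K := fun x => hmaps (hPK x).1
  obtain ⟨x, hx⟩ := exists_isFixedPt_of_isBounded_range
    (hf.comp_continuous hP.continuous fun x => (hPK x).1)
    (hK.isBounded.subset (range_subset_iff.2 hfP))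
  have hxK : x ∈ K := hx ▸ hfP x
  have hPx : P x = x := by
    have hle := (hPK x).2 x hxK
    rw [real_inner_self_nonpos, sub_eq_zero] at hle
    exact hle.symm
  exact ⟨x, hxK, (congrArg f hPx).symm.trans hx⟩

-- A solution is a fixed point of `x ↦ P (x + F x)`, with `P` the metric projection onto `K`.
theorem exists_forall_inner_sub_le_zero {K : Set E} {F : E → E} (hne : K.Nonempty)
    (hK : IsCompact K) (hKc : Convex ℝ K) (hF : ContinuousOn F K) :
    ∃ x ∈ K, ∀ y ∈ K, inner ℝ (F x) (y - x) ≤ 0 := by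
  obtain ⟨P, hP, hPK⟩ := exists_lipschitzWith_one_inner_le_zero hne hK.isComplete hKc
  obtain ⟨x, hx, hfix⟩ := exists_isFixedPt_of_isCompact_convex hne hK hKc
    (hP.continuous.comp_continuousOn (continuousOn_id.add hF)) fun x _ => (hPK (x + F x)).1
  refine ⟨x, hx, fun y hy => ?_⟩
  have hvar := (hPK (x + F x)).2 y hy
  rwa [show P (x + F x) = x from hfix, add_sub_cancel_left] at hvar

end InnerProductSpace

end BrouwerFixedPoint

section WalrasEquilibrium

open Filter Topology

variable {ι : Type*} [Fintype ι]

lemma exists_forall_dotProduct_sub_le_zero {K : Set (ι → ℝ)} {F : (ι → ℝ) → ι → ℝ}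
    (hne : K.Nonempty) (hK : IsCompact K) (hKc : Convex ℝ K) (hF : ContinuousOn F K) :
    ∃ x ∈ K, ∀ y ∈ K, F x ⬝ᵥ (y - x) ≤ 0 := by
  let e := (EuclideanSpace.equiv ι ℝ).symm
  obtain ⟨-, ⟨x, hx, rfl⟩, hvar⟩ := exists_forall_inner_sub_le_zero (K := e '' K)
    (F := fun x => e (F (e.symm x))) (hne.image _) (hK.image e.continuous)
    (hKc.linear_image e.toLinearMap)
    (e.continuous.comp_continuousOn (hF.comp e.symm.continuous.continuousOn
      (by rintro - ⟨x, hx, rfl⟩; simpa using hx)))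
  refine ⟨x, hx, fun y hy => ?_⟩
  have hxy := hvar _ (mem_image_of_mem e hy)
  rw [e.symm_apply_apply, ← map_sub, EuclideanSpace.inner_eq_star_dotProduct,
    dotProduct_comm] at hxy
  simpa [e] using hxy

theorem exists_mem_stdSimplex_nonpos_of_walras_law [Nonempty ι] {z : (ι → ℝ) → ι → ℝ}
    (hz : ContinuousOn z (stdSimplex ℝ ι)) (hwalras : ∀ p ∈ stdSimplex ℝ ι, z p ⬝ᵥ p ≤ 0) :
    ∃ p ∈ stdSimplex ℝ ι, z p ≤ 0 := by
  classical
  obtain ⟨p, hp, hvar⟩ := exists_forall_dotProduct_sub_le_zero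
    ⟨_, single_mem_stdSimplex ℝ (Classical.arbitrary ι)⟩ (isCompact_stdSimplex ℝ ι)
    (convex_stdSimplex ℝ ι) hz
  refine ⟨p, hp, fun c => ?_⟩
  have hc := hvar _ (single_mem_stdSimplex ℝ c)
  rw [dotProduct_sub, dotProduct_single_one] at hc
  exact (sub_nonpos.1 hc).trans (hwalras p hp)

lemma dotProduct_pos_of_mem_stdSimplex {p w : ι → ℝ} (hp : p ∈ stdSimplex ℝ ι)
    (hw : ∀ c, 0 < w c) : 0 < p ⬝ᵥ w := by
  obtain ⟨c, -, hc⟩ := (Finset.sum_pos_iff_of_nonneg fun c _ => hp.1 c).1 (hp.2 ▸ one_pos)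
  exact Finset.sum_pos' (fun c _ => mul_nonneg (hp.1 c) (hw c).le)
    ⟨c, Finset.mem_univ c, mul_pos hc (hw c)⟩

/-- The bundles of the consumption set `B` that are affordable at prices `p` for the owner of the
endowment `w`. -/
def budgetSet (B : Set (ι → ℝ)) (p w : ι → ℝ) : Set (ι → ℝ) :=
  {y ∈ B | p ⬝ᵥ y ≤ p ⬝ᵥ w}

/-- The bundles maximizing the utility `u` on the budget set. -/
def demandSet (B : Set (ι → ℝ)) (u : (ι → ℝ) → ℝ) (p w : ι → ℝ) : Set (ι → ℝ) :=
  {x ∈ budgetSet B p w | IsMaxOn u (budgetSet B p w) x}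

variable {B : Set (ι → ℝ)} {u : (ι → ℝ) → ℝ} {p w x : ι → ℝ}

lemma convex_budgetSet (hB : Convex ℝ B) (p w : ι → ℝ) : Convex ℝ (budgetSet B p w) :=
  hB.inter (convex_halfSpace_le (LinearMap.isLinear (dotProductBilin ℝ ℝ p)) _)

lemma isMaxOn_budgetSet_iff (hB : Convex ℝ B) (h0 : 0 ∈ B) (hu : ContinuousOn u B)
    (hpw : 0 < p ⬝ᵥ w) :
    IsMaxOn u (budgetSet B p w) x ↔ ∀ y ∈ B, p ⬝ᵥ y < p ⬝ᵥ w → u y ≤ u x := by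
  refine ⟨fun h y hy hlt => h ⟨hy, hlt.le⟩, fun h y hy => ?_⟩
  have hmem : ∀ t ∈ Icc (0 : ℝ) 1, t • y ∈ B := fun t ht => hB.smul_mem_of_zero_mem h0 hy.1 ht
  have hcont : ContinuousOn (fun t : ℝ => u (t • y)) (Icc 0 1) :=
    hu.comp (by fun_prop) hmem
  have hcheap : ∀ t ∈ Ico (0 : ℝ) 1, u (t • y) ≤ u x := fun t ht => by
    refine h _ (hmem t (Ico_subset_Icc_self ht)) ?_
    rw [dotProduct_smul, smul_eq_mul]
    calc t * p ⬝ᵥ y ≤ t * p ⬝ᵥ w := mul_le_mul_of_nonneg_left hy.2 ht.1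
      _ < p ⬝ᵥ w := mul_lt_of_lt_one_left hpw ht.2
  have hone : (1 : ℝ) ∈ closure (Ico (0 : ℝ) 1) := by
    rw [closure_Ico zero_ne_one]
    exact right_mem_Icc.2 zero_le_one
  have hle := ((hcont 1 (right_mem_Icc.2 zero_le_one)).mono Ico_subset_Icc_self).closure_le hone
    continuousWithinAt_const hcheap
  rwa [one_smul] at hle

lemma isClosed_graph_demandSet {T : Type*} [TopologicalSpace T]
    {u : T → (ι → ℝ) → ℝ} (hBc : IsClosed B) (hB : Convex ℝ B) (h0 : 0 ∈ B)
    (hu : ContinuousOn (Function.uncurry u) (univ ×ˢ B)) (hw : ∀ c, 0 < w c) :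
    IsClosed {a : T × (ι → ℝ) × (ι → ℝ) |
      a.2.1 ∈ stdSimplex ℝ ι ∧ a.2.2 ∈ demandSet B (u a.1) a.2.1 w} := by
  let S : Set (T × (ι → ℝ) × (ι → ℝ)) := {a | a.2.1 ∈ stdSimplex ℝ ι ∧ a.2.2 ∈ budgetSet B a.2.1 w}
  have hbudget : IsClosed {a : T × (ι → ℝ) × (ι → ℝ) | a.2.1 ⬝ᵥ a.2.2 ≤ a.2.1 ⬝ᵥ w} :=
    isClosed_le (by fun_prop) (by fun_prop)
  have hS : IsClosed S := ((isClosed_stdSimplex ℝ ι).preimage (by fun_prop)).inter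
    ((hBc.preimage (by fun_prop)).inter hbudget)
  have hdear : ∀ y, IsClosed {a : T × (ι → ℝ) × (ι → ℝ) | a.2.1 ⬝ᵥ w ≤ a.2.1 ⬝ᵥ y} := fun y =>
    isClosed_le (by fun_prop) (by fun_prop)
  have hworse : ∀ y ∈ B, IsClosed {a ∈ S | u a.1 y ≤ u a.1 a.2.2} := fun y hy =>
    hS.isClosed_le
      (hu.comp (f := fun a : T × (ι → ℝ) × (ι → ℝ) => (a.1, y)) (by fun_prop)
        fun a _ => ⟨mem_univ _, hy⟩)
      (hu.comp (f := fun a : T × (ι → ℝ) × (ι → ℝ) => (a.1, a.2.2)) (by fun_prop)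
        fun a ha => ⟨mem_univ _, ha.2.1⟩)
  convert! hS.inter (isClosed_biInter fun y hy => (hdear y).union (hworse y hy)) using 1
  ext a
  refine ⟨fun ⟨hp, hx, hmax⟩ => ⟨⟨hp, hx⟩, mem_iInter₂.2 fun y hy => ?_⟩,
    fun ⟨⟨hp, hx⟩, hy⟩ => ⟨hp, hx, ?_⟩⟩
  · exact (le_or_gt (a.2.1 ⬝ᵥ w) (a.2.1 ⬝ᵥ y)).imp_right
      fun hlt => ⟨⟨hp, hx⟩, hmax ⟨hy, hlt.le⟩⟩
  · refine (isMaxOn_budgetSet_iff hB h0 (hu.uncurry_left a.1 (mem_univ _))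
      (dotProduct_pos_of_mem_stdSimplex hp hw)).2 fun y hyB hlt => ?_
    exact ((mem_iInter₂.1 hy y hyB).resolve_left hlt.not_ge).2

lemma demandSet_nonempty (hB : IsCompact B) (h0 : 0 ∈ B) (hu : ContinuousOn u B)
    (hpw : 0 ≤ p ⬝ᵥ w) : (demandSet B u p w).Nonempty := by
  have hcompact : IsCompact (budgetSet B p w) :=
    hB.inter_right (isClosed_le (f := fun y => p ⬝ᵥ y) (by fun_prop) continuous_const)
  exact hcompact.exists_isMaxOn ⟨0, h0, by rwa [dotProduct_zero]⟩ (hu.mono (sep_subset _ _))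

lemma demandSet_subsingleton (hu : StrictConcaveOn ℝ B u) : (demandSet B u p w).Subsingleton :=
  fun _ hx _ hy => (hu.subset (sep_subset _ _) (convex_budgetSet hu.1 p w)).eq_of_isMaxOn
    hx.2 hy.2 hx.1 hy.1

lemma continuousOn_of_mem_demandSet {d : (ι → ℝ) → ι → ℝ} (hB : IsCompact B) (h0 : 0 ∈ B)
    (hu : ContinuousOn u B) (huc : StrictConcaveOn ℝ B u) (hw : ∀ c, 0 < w c)
    (hd : ∀ p ∈ stdSimplex ℝ ι, d p ∈ demandSet B u p w) : ContinuousOn d (stdSimplex ℝ ι) := by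
  intro p hp
  refine hB.tendsto_nhds_of_unique_mapClusterPt
    (eventually_mem_nhdsWithin.mono fun q hq => (hd q hq).1.1) fun y _ hy => ?_
  obtain ⟨l, hl, hly⟩ := mapClusterPt_iff_ultrafilter.1 hy
  have hgraph := isClosed_graph_demandSet (T := Unit) (u := fun _ => u) hB.isClosed huc.1 h0
    (hu.comp continuousOn_snd fun a ha => ha.2) hw
  have hmem : ((), p, y) ∈ {a : Unit × (ι → ℝ) × (ι → ℝ) |
      a.2.1 ∈ stdSimplex ℝ ι ∧ a.2.2 ∈ demandSet B u a.2.1 w} :=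
    hgraph.mem_of_tendsto (tendsto_const_nhds.prodMk_nhds
      (Tendsto.prodMk_nhds (hl.trans nhdsWithin_le_nhds) hly))
      ((l.eventually_mem_set.2 (hl self_mem_nhdsWithin)).mono fun q hq => ⟨hq, hd q hq⟩)
  exact demandSet_subsingleton huc hmem.2 (hd p hp)

lemma mem_demandSet_of_inter_nhds {N : Set (ι → ℝ)} (hu : ConcaveOn ℝ B u) (hN : N ∈ 𝓝 x)
    (hx : x ∈ demandSet (B ∩ N) u p w) : x ∈ demandSet B u p w := by
  have hxB : x ∈ budgetSet B p w := ⟨hx.1.1.1, hx.1.2⟩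
  refine ⟨hxB, IsMaxOn.of_isLocalMaxOn_of_concaveOn hxB ?_
    (hu.subset (sep_subset _ _) (convex_budgetSet hu.1 p w))⟩
  filter_upwards [self_mem_nhdsWithin, mem_nhdsWithin_of_mem_nhds hN] with y hy hyN
  exact hx.2 ⟨⟨hy.1, hyN⟩, hy.2⟩

variable {J : Type*} [Fintype J]

/-- A Walras equilibrium, with normalized prices and free disposal, of the exchange economy in
which agent `j` has consumption set `B`, endowment `w j` and utility `u j`. -/
structure IsWalrasEquilibrium (B : Set (ι → ℝ)) (w : J → ι → ℝ) (u : J → (ι → ℝ) → ℝ)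
    (p : ι → ℝ) (x : J → ι → ℝ) : Prop where
  price_mem : p ∈ stdSimplex ℝ ι
  feasible : ∑ j, x j ≤ ∑ j, w j
  mem_demandSet : ∀ j, x j ∈ demandSet B (u j) p (w j)

variable {w : J → ι → ℝ} {u : J → (ι → ℝ) → ℝ}

lemma exists_isWalrasEquilibrium_of_strictConcaveOn [Nonempty ι] (hB : IsCompact B) (h0 : 0 ∈ B)
    (hw : ∀ j c, 0 < w j c) (hu : ∀ j, ContinuousOn (u j) B)
    (huc : ∀ j, StrictConcaveOn ℝ B (u j)) : ∃ p x, IsWalrasEquilibrium B w u p x := by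
  have hdemand : ∀ j p, ∃ x, p ∈ stdSimplex ℝ ι → x ∈ demandSet B (u j) p (w j) := fun j p => by
    by_cases hp : p ∈ stdSimplex ℝ ι
    · obtain ⟨x, hx⟩ := demandSet_nonempty hB h0 (hu j)
        (dotProduct_pos_of_mem_stdSimplex hp (hw j)).le
      exact ⟨x, fun _ => hx⟩
    · exact ⟨0, fun h => absurd h hp⟩
  choose d hd using hdemand
  have hcont : ContinuousOn (fun p => ∑ j, d j p - ∑ j, w j) (stdSimplex ℝ ι) :=
    (continuousOn_finsetSum _ fun j _ =>
      continuousOn_of_mem_demandSet hB h0 (hu j) (huc j) (hw j) (hd j)).sub continuousOn_const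
  have hwalras : ∀ p ∈ stdSimplex ℝ ι, (∑ j, d j p - ∑ j, w j) ⬝ᵥ p ≤ 0 := fun p hp => by
    rw [dotProduct_comm, ← Finset.sum_sub_distrib, dotProduct_sum]
    refine Finset.sum_nonpos fun j _ => ?_
    rw [dotProduct_sub]
    exact sub_nonpos.2 (hd j p hp).1.2
  obtain ⟨p, hp, hz⟩ := exists_mem_stdSimplex_nonpos_of_walras_law hcont hwalras
  exact ⟨p, fun j => d j p, hp, sub_nonpos.1 hz, fun j => hd j p hp⟩

lemma isClosed_graph_isWalrasEquilibrium {T : Type*} [TopologicalSpace T]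
    {u : J → T → (ι → ℝ) → ℝ} (hBc : IsClosed B) (hB : Convex ℝ B) (h0 : 0 ∈ B)
    (hw : ∀ j c, 0 < w j c)
    (hu : ∀ j, ContinuousOn (Function.uncurry (u j)) (univ ×ˢ B)) :
    IsClosed {a : T × (ι → ℝ) × (J → ι → ℝ) |
      IsWalrasEquilibrium B w (fun j => u j a.1) a.2.1 a.2.2} := by
  have hprice : IsClosed {a : T × (ι → ℝ) × (J → ι → ℝ) | a.2.1 ∈ stdSimplex ℝ ι} :=
    (isClosed_stdSimplex ℝ ι).preimage (by fun_prop)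
  have hfeas : IsClosed {a : T × (ι → ℝ) × (J → ι → ℝ) | ∑ j, a.2.2 j ≤ ∑ j, w j} :=
    isClosed_le (by fun_prop) continuous_const
  have hdemand : ∀ j, IsClosed {a : T × (ι → ℝ) × (J → ι → ℝ) |
      a.2.1 ∈ stdSimplex ℝ ι ∧ a.2.2 j ∈ demandSet B (u j a.1) a.2.1 (w j)} := fun j =>
    (isClosed_graph_demandSet hBc hB h0 (hu j) (hw j)).preimage
      (f := fun a : T × (ι → ℝ) × (J → ι → ℝ) => (a.1, a.2.1, a.2.2 j)) (by fun_prop)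
  convert! (hprice.inter hfeas).inter (isClosed_iInter hdemand) using 1
  ext a
  simp only [mem_ofPred_eq, mem_inter_iff, mem_iInter]
  exact ⟨fun h => ⟨⟨h.price_mem, h.feasible⟩, fun j => ⟨h.price_mem, h.mem_demandSet j⟩⟩,
    fun h => ⟨h.1.1, h.1.2, fun j => (h.2 j).2⟩⟩

lemma strictConvexOn_mul_dotProduct_self {ε : ℝ} (hε : 0 < ε) :
    StrictConvexOn ℝ univ fun x : ι → ℝ => ε * (x ⬝ᵥ x) := by
  refine ⟨convex_univ, fun x _ y _ hxy a b ha hb hab => ?_⟩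
  have hpos : 0 < (x - y) ⬝ᵥ (x - y) := by
    simpa using Matrix.dotProduct_star_self_pos_iff.2 (sub_ne_zero.2 hxy)
  have hgap : a * (x ⬝ᵥ x) + b * (y ⬝ᵥ y) - (a • x + b • y) ⬝ᵥ (a • x + b • y)
      = a * b * ((x - y) ⬝ᵥ (x - y)) := by
    obtain rfl : b = 1 - a := by linarith
    simp only [dotProduct_add, add_dotProduct, dotProduct_sub, sub_dotProduct, smul_dotProduct,
      dotProduct_smul, smul_eq_mul, dotProduct_comm y x]
    ring
  simp only [smul_eq_mul]
  nlinarith [mul_pos hε (mul_pos (mul_pos ha hb) hpos)]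

lemma exists_isWalrasEquilibrium_of_isCompact [Nonempty ι] (hB : IsCompact B) (h0 : 0 ∈ B)
    (hBc : Convex ℝ B) (hw : ∀ j c, 0 < w j c) (hu : ∀ j, ContinuousOn (u j) B)
    (huc : ∀ j, ConcaveOn ℝ B (u j)) : ∃ p x, IsWalrasEquilibrium B w u p x := by
  let v : J → ℝ → (ι → ℝ) → ℝ := fun j ε x => u j x - ε * (x ⬝ᵥ x)
  have hvcont : ∀ j, ContinuousOn (Function.uncurry (v j)) (univ ×ˢ B) := fun j =>
    ((hu j).comp continuousOn_snd fun a ha => ha.2).sub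
      (continuous_fst.mul (continuous_snd.dotProduct continuous_snd)).continuousOn
  have hvconc : ∀ j, ∀ ε > 0, StrictConcaveOn ℝ B (v j ε) := fun j ε hε =>
    (huc j).sub_strictConvexOn ((strictConvexOn_mul_dotProduct_self hε).subset (subset_univ B) hBc)
  have hperturbed : ∀ n : ℕ, ∃ p x, IsWalrasEquilibrium B w (fun j => v j (1 / (n + 1))) p x :=
    fun n => exists_isWalrasEquilibrium_of_strictConcaveOn hB h0 hw
      (fun j => (hvcont j).uncurry_left _ (mem_univ _))
      fun j => hvconc j _ Nat.one_div_pos_of_nat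
  choose P X hPX using hperturbed
  obtain ⟨⟨p, x⟩, -, φ, hφ, hlim⟩ := ((isCompact_stdSimplex ℝ ι).prod
    (isCompact_univ_pi fun _ : J => hB)).tendsto_subseq (x := fun n => (P n, X n))
    fun n => ⟨(hPX n).price_mem, fun j _ => ((hPX n).mem_demandSet j).1.1⟩
  have hequil := (isClosed_graph_isWalrasEquilibrium hB.isClosed hBc h0 hw hvcont).mem_of_tendsto
    ((tendsto_one_div_add_atTop_nhds_zero_nat.comp hφ.tendsto_atTop).prodMk_nhds hlim)
    (Eventually.of_forall fun n => hPX (φ n))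
  exact ⟨p, x, by simpa [v] using hequil⟩

-- An equilibrium allocation is interior to the box bounding the consumption sets, where by
-- concavity a local maximum is a global one.
theorem exists_isWalrasEquilibrium [Nonempty ι] (hw : ∀ j c, 0 < w j c)
    (hu : ∀ j, ContinuousOn (u j) (Ici 0)) (huc : ∀ j, ConcaveOn ℝ (Ici 0) (u j)) :
    ∃ p x, IsWalrasEquilibrium (Ici 0) w u p x := by
  let b : ι → ℝ := ∑ j, w j + 1
  have hb : (0 : ι → ℝ) ≤ b :=
    add_nonneg (Finset.sum_nonneg fun j _ c => (hw j c).le) zero_le_one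
  obtain ⟨p, x, hequil⟩ := exists_isWalrasEquilibrium_of_isCompact (isCompact_Icc (a := 0) (b := b))
    (left_mem_Icc.2 hb) (convex_Icc 0 b) hw (fun j => (hu j).mono Icc_subset_Ici_self)
    fun j => (huc j).subset Icc_subset_Ici_self (convex_Icc 0 b)
  have hlt : ∀ j c, x j c < b c := fun j c => by
    have hle : x j ≤ ∑ j, w j :=
      (Finset.single_le_sum (f := x) (fun i _ => (hequil.mem_demandSet i).1.1.1)
        (Finset.mem_univ j)).trans hequil.feasible
    exact (hle c).trans_lt (lt_add_one _)
  exact ⟨p, x, hequil.price_mem, hequil.feasible, fun j =>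
    mem_demandSet_of_inter_nhds (huc j) (pi_Iic_mem_nhds (a := b) (hlt j))
      (by simpa only [Ici_inter_Iic] using hequil.mem_demandSet j)⟩

end WalrasEquilibrium

section Transfer

section IndicatorConstLp

variable {α : Type*} [MeasurableSpace α] {μ : Measure α} {p : ℝ≥0∞} {s : Set α}

lemma indicatorConstLp_smul {F : Type*} [NormedAddCommGroup F] [NormedSpace ℝ F]
    (hs : MeasurableSet s) (hμs : μ s ≠ ∞) (a : ℝ) (c : F) :
    indicatorConstLp p hs hμs (a • c) = a • indicatorConstLp p hs hμs c := by
  simp only [indicatorConstLp, ← MemLp.toLp_const_smul]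
  congr 1
  exact indicator_const_smul s a (fun _ => c)

lemma indicatorConstLp_nonneg (hs : MeasurableSet s) (hμs : μ s ≠ ∞) {c : ℝ} (hc : 0 ≤ c) :
    0 ≤ indicatorConstLp p hs hμs c := by
  rw [← Lp.coeFn_nonneg]
  filter_upwards [indicatorConstLp_coeFn (p := p) (hs := hs) (hμs := hμs) (c := c)] with t ht
  rw [ht]
  exact indicator_nonneg (fun _ _ => hc) t

end IndicatorConstLp

variable {ω : Measure ℝ}

lemma nonempty_parts (π : Classification ω) : Nonempty π.parts := by
  obtain ⟨C, hC, -⟩ : (0 : ℝ) ∈ ⋃₀ (π.parts : Set (Set ℝ)) :=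
    π.cover ▸ left_mem_Icc.2 zero_le_one
  exact ⟨⟨C, hC⟩⟩

lemma sum_parts_mul (π : Classification ω) (p y : Set ℝ → ℝ) :
    ∑ C ∈ π.parts, p C * y C = π.parts.restrict p ⬝ᵥ π.parts.restrict y :=
  (Finset.sum_coe_sort π.parts fun C => p C * y C).symm

variable [IsFiniteMeasure ω]

/-- The map `tradable` on bundles indexed by the parts of the classification only, where it is
linear. -/
def tradableLinearMap (π : Classification ω) : (π.parts → ℝ) →ₗ[ℝ] Lp ℝ 1 ω where
  toFun x := ∑ C : π.parts, indicatorConstLp 1 (π.isInterval C C.2).measurableSet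
    (measure_ne_top ω C) (x C / (ω C).toReal)
  map_add' x y := by
    simp only [Pi.add_apply, add_div, ← indicatorConstLp_add, Finset.sum_add_distrib]
  map_smul' a x := by
    simp only [Pi.smul_apply, smul_div_assoc, indicatorConstLp_smul, Finset.smul_sum,
      RingHom.id_apply]

lemma tradable_eq_tradableLinearMap (π : Classification ω) (x : Set ℝ → ℝ) :
    tradable ω π x = tradableLinearMap π (π.parts.restrict x) :=
  rfl

lemma tradableLinearMap_mem_posCone (π : Classification ω) {x : π.parts → ℝ} (hx : 0 ≤ x) :
    tradableLinearMap π x ∈ PosCone ω :=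
  (Lp.coeFn_nonneg _).2 <| Finset.sum_nonneg fun C _ =>
    indicatorConstLp_nonneg _ _ (div_nonneg (hx C) ENNReal.toReal_nonneg)

variable {n : ℕ} {κ : Fin n → ℝ} {U : Fin n → Lp ℝ 1 ω → ℝ} {π : Classification ω}
  {p : Set ℝ → ℝ} {x : Fin n → Set ℝ → ℝ}

lemma IsWalrasEquilibrium.isEquilibrium (hκsum : ∑ i, κ i ≤ 1)
    (h : IsWalrasEquilibrium (Ici 0) (fun i => κ i • π.parts.restrict fun C => (ω C).toReal)
      (fun i y => U i (tradableLinearMap π y)) (π.parts.restrict p)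
      fun i => π.parts.restrict (x i)) : IsEquilibrium ω κ U π p x := by
  have hbudget : ∀ i, ∀ y : Set ℝ → ℝ,
      π.parts.restrict p ⬝ᵥ π.parts.restrict y
          ≤ π.parts.restrict p ⬝ᵥ κ i • π.parts.restrict (fun C => (ω C).toReal) ↔
        ∑ C ∈ π.parts, p C * y C ≤ κ i * ∑ C ∈ π.parts, p C * (ω C).toReal := fun i y => by
    rw [sum_parts_mul, sum_parts_mul, dotProduct_smul, smul_eq_mul]
  refine ⟨fun C hC => h.price_mem.1 ⟨C, hC⟩, fun i C hC => (h.mem_demandSet i).1.1 ⟨C, hC⟩,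
    fun C hC => ?_, fun i => (hbudget i _).1 (h.mem_demandSet i).1.2, fun i y hy hlt => ?_⟩
  · have hfeas := h.feasible ⟨C, hC⟩
    rw [← Finset.sum_smul, Finset.sum_apply] at hfeas
    exact hfeas.trans (mul_le_of_le_one_left ENNReal.toReal_nonneg hκsum)
  · by_contra! hcheap
    rw [V, V, tradable_eq_tradableLinearMap, tradable_eq_tradableLinearMap] at hlt
    exact hlt.not_ge ((h.mem_demandSet i).2
      ⟨fun C => hy C C.2, (hbudget i y).2 hcheap⟩)

theorem equilibrium_exists_general (hκpos : ∀ i, 0 < κ i) (hκsum : ∑ i, κ i ≤ 1)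
    (hcont : ∀ i, ContinuousOn (U i) (PosCone ω)) (hconc : ∀ i, ConcaveOn ℝ (PosCone ω) (U i))
    (π : Classification ω) :
    ∃ (p : Set ℝ → ℝ) (x : Fin n → Set ℝ → ℝ), IsEquilibrium ω κ U π p x := by
  have := nonempty_parts π
  have hL : MapsTo (tradableLinearMap π) (Ici 0) (PosCone ω) := fun _ =>
    tradableLinearMap_mem_posCone π
  obtain ⟨p, x, h⟩ := exists_isWalrasEquilibrium
    (w := fun i => κ i • π.parts.restrict fun C => (ω C).toReal)
    (fun i C => mul_pos (hκpos i)
      (ENNReal.toReal_pos (π.posMeas C C.2).ne' (measure_ne_top ω C)))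
    (fun i => (hcont i).comp
      (tradableLinearMap π).continuous_of_finiteDimensional.continuousOn hL)
    fun i => ((hconc i).comp_linearMap (tradableLinearMap π)).subset hL (convex_Ici 0)
  have hrestrict : Function.Surjective (π.parts.restrict (π := fun _ => ℝ)) :=
    Function.Injective.surjective_comp_right (γ := ℝ) Subtype.val_injective
  obtain ⟨p, rfl⟩ := hrestrict p
  choose x' hx' using fun i => hrestrict (x i)
  obtain rfl : (fun i => π.parts.restrict (x' i)) = x := funext hx'
  exact ⟨p, x', h.isEquilibrium hκsum⟩

end Transfer

/-- for every classification π, the economy E(π) admits a competitive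
equilibrium. -/
theorem equilibrium_exists (ω : Measure ℝ) [IsProbabilityMeasure ω]
    (hω : ω (Set.Icc (0 : ℝ) 1) = 1)
    (n : ℕ) (κ : Fin n → ℝ) (hκpos : ∀ i, 0 < κ i) (hκsum : ∑ i, κ i = 1)
    (U : Fin n → Lp ℝ 1 ω → ℝ) (hU : ∀ i, IsUtility ω (U i))
    (π : Classification ω) :
    ∃ (p : Set ℝ → ℝ) (x : Fin n → Set ℝ → ℝ), IsEquilibrium ω κ U π p x :=
  equilibrium_exists_general hκpos hκsum.le (fun i => (hU i).1) (fun i => (hU i).2.1) π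

end
end

section
/- For every t ∈ (0,1), the economy E(π_t) with π_t = {A, B_t, C_t, D}, where A = [0,1/4), B_t = [1/4,(1+2t)/4), C_t = [(1+2t)/4,3/4), D = [3/4,1], has a competitive equilibrium ⟨p_t,(x^i)⟩ whose prices satisfy p_t(D) = 1 and: if t ≤ 1/6 then p_t(A) = p_t(B_t) = 1/(1−2t) and p_t(C_t) = 1/(2(1−t)); if 1/6 < t ≤ 1/2 then p_t(A) = p_t(B_t) = 2/(1+2t) and p_t(C_t) = 1/(2(1−t)); if 1/2 ≤ t ≤ 5/6 then p_t(A) = (3−2t)/2, p_t(B_t) = (3−2t)/(4t), and p_t(C_t) = 1; if t > 5/6 then p_t(A) = 2t−1, p_t(B_t) = (2t−1)/(2t), and p_t(C_t) = 1. In particular, the price ratio p_t(A)/p_t(D) takes every value in [2/3, 3/2] as t ranges over (0,1). -/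
/-!
For linear utilities a bundle is optimal within its budget as soon as it exhausts that budget on
commodities that provide utility at the lowest cost. Group 1 buys all of `A`, group 2 all of `D`.
Suppose that group 1 buys exactly `A ∪ Bt t`, and let the prices on each side be proportional to
the evaluations of the group buying there, scaled so that both sides cost the same. This is an
equilibrium as long as neither group gets utility more cheaply on the other side, which holds for
`1/6 ≤ t ≤ 5/6`. For smaller `t` group 1 also buys part of `Ct t`, for larger `t` group 2 also buys
part of `Bt t`; then the indifference of the group buying on both sides fixes the ratio
`p A / p D`, and the budget equation fixes the share it buys.
-/

open MeasureTheory Set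
open scoped ENNReal Classical

noncomputable section

/-- Lebesgue measure of a set, as a real number. -/
def lvol (C : Set ℝ) : ℝ := (volume C).toReal

/-- Linear utility over tradable bundles: `V(π,x) = ∑_{C∈π} (x_C/λ(C)) ν(C)`,
where the evaluation of each commodity is given by the set function `νf`. -/
def Vlin (parts : Finset (Set ℝ)) (νf : Set ℝ → ℝ) (x : Set ℝ → ℝ) : ℝ :=
  ∑ C ∈ parts, (x C / lvol C) * νf C

/-- Competitive equilibrium of the economy on the commodities `parts` with claims `κ`
and utilities `Vf` on tradable bundles. -/
def IsEqm {n : ℕ} (parts : Finset (Set ℝ)) (κ : Fin n → ℝ)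
    (Vf : Fin n → (Set ℝ → ℝ) → ℝ) (p : Set ℝ → ℝ) (x : Fin n → Set ℝ → ℝ) : Prop :=
  (∀ C ∈ parts, 0 ≤ p C) ∧
  (∀ i, ∀ C ∈ parts, 0 ≤ x i C) ∧
  (∀ C ∈ parts, ∑ i, x i C ≤ lvol C) ∧
  (∀ i, ∑ C ∈ parts, p C * x i C ≤ κ i * ∑ C ∈ parts, p C * lvol C) ∧
  (∀ i, ∀ y : Set ℝ → ℝ, (∀ C ∈ parts, 0 ≤ y C) → Vf i (x i) < Vf i y →
    κ i * ∑ C ∈ parts, p C * lvol C < ∑ C ∈ parts, p C * y C)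

namespace Stmt11

/-- Group 1's evaluation measure: `ν₁(F) = 2 λ(F ∩ [0,1/2])`. -/
def ν₁ (F : Set ℝ) : ℝ := 2 * lvol (F ∩ Set.Icc 0 (1/2))

/-- Group 2's evaluation measure: `ν₂(F) = 2 λ(F ∩ [1/2,1])`. -/
def ν₂ (F : Set ℝ) : ℝ := 2 * lvol (F ∩ Set.Icc (1/2) 1)

/-- The `2n` agents: the first `n` belong to group 1, the rest to group 2. -/
def νs (n : ℕ) : Fin (2 * n) → Set ℝ → ℝ := fun i => if (i : ℕ) < n then ν₁ else ν₂

/-- Identical claims `κᵢ = 1/(2n)`. -/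
def κ (n : ℕ) : Fin (2 * n) → ℝ := fun _ => 1 / (2 * n)

def A : Set ℝ := Set.Ico 0 (1/4)
def Bt (t : ℝ) : Set ℝ := Set.Ico (1/4) ((1 + 2*t)/4)
def Ct (t : ℝ) : Set ℝ := Set.Ico ((1 + 2*t)/4) (3/4)
def D : Set ℝ := Set.Icc (3/4) 1

/-- The classification `π_t = {A, B_t, C_t, D}`. -/
def partsT (t : ℝ) : Finset (Set ℝ) := {A, Bt t, Ct t, D}

/-- The bundle `z` buys utility at the lowest cost: at prices `p` a unit of utility under the
evaluation `ν` costs at least `μ`, and exactly `μ` with every commodity contained in `z`. The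
condition compares the costs of whole cells, so that it involves no division. -/
def IsCostEfficient (parts : Finset (Set ℝ)) (ν p : Set ℝ → ℝ) (μ : ℝ) (z : Set ℝ → ℝ) : Prop :=
  ∀ C ∈ parts, μ * ν C ≤ p C * lvol C ∧ (z C = 0 ∨ μ * ν C = p C * lvol C)

section LinearUtility

variable {parts : Finset (Set ℝ)} {ν p y z : Set ℝ → ℝ} {μ : ℝ}

theorem IsCostEfficient.mul_Vlin_eq_cost (h : IsCostEfficient parts ν p μ z)
    (hpos : ∀ C ∈ parts, 0 < lvol C) : μ * Vlin parts ν z = ∑ C ∈ parts, p C * z C := by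
  rw [Vlin, Finset.mul_sum]
  refine Finset.sum_congr rfl fun C hC => ?_
  rcases (h C hC).2 with hz | hν
  · simp [hz]
  · rw [mul_left_comm, hν, mul_left_comm, div_mul_cancel₀ _ (hpos C hC).ne']

theorem IsCostEfficient.mul_Vlin_le_cost (h : IsCostEfficient parts ν p μ z)
    (hpos : ∀ C ∈ parts, 0 < lvol C) (hy : ∀ C ∈ parts, 0 ≤ y C) :
    μ * Vlin parts ν y ≤ ∑ C ∈ parts, p C * y C := by
  rw [Vlin, Finset.mul_sum]
  refine Finset.sum_le_sum fun C hC => ?_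
  calc μ * (y C / lvol C * ν C) = y C / lvol C * (μ * ν C) := mul_left_comm ..
    _ ≤ y C / lvol C * (p C * lvol C) :=
        mul_le_mul_of_nonneg_left (h C hC).1 (div_nonneg (hy C hC) (hpos C hC).le)
    _ = p C * y C := by rw [mul_left_comm, div_mul_cancel₀ _ (hpos C hC).ne']

theorem IsCostEfficient.cost_lt_of_Vlin_lt (h : IsCostEfficient parts ν p μ z) (hμ : 0 < μ)
    (hpos : ∀ C ∈ parts, 0 < lvol C) (hy : ∀ C ∈ parts, 0 ≤ y C)
    (hlt : Vlin parts ν z < Vlin parts ν y) :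
    ∑ C ∈ parts, p C * z C < ∑ C ∈ parts, p C * y C :=
  calc ∑ C ∈ parts, p C * z C = μ * Vlin parts ν z := (h.mul_Vlin_eq_cost hpos).symm
    _ < μ * Vlin parts ν y := mul_lt_mul_of_pos_left hlt hμ
    _ ≤ ∑ C ∈ parts, p C * y C := h.mul_Vlin_le_cost hpos hy

theorem isEqm_of_isCostEfficient {k : ℕ} {claim μ : Fin k → ℝ} {ν x : Fin k → Set ℝ → ℝ}
    (hpos : ∀ C ∈ parts, 0 < lvol C) (hp : ∀ C ∈ parts, 0 ≤ p C)
    (hx : ∀ i, ∀ C ∈ parts, 0 ≤ x i C) (hfeas : ∀ C ∈ parts, ∑ i, x i C ≤ lvol C)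
    (hbudget : ∀ i, ∑ C ∈ parts, p C * x i C = claim i * ∑ C ∈ parts, p C * lvol C)
    (hμ : ∀ i, 0 < μ i) (heff : ∀ i, IsCostEfficient parts (ν i) p (μ i) (x i)) :
    IsEqm parts claim (fun i => Vlin parts (ν i)) p x :=
  ⟨hp, hx, hfeas, fun i => (hbudget i).le, fun i _ hy hlt =>
    (hbudget i).symm.trans_lt ((heff i).cost_lt_of_Vlin_lt (hμ i) hpos hy hlt)⟩

end LinearUtility

theorem sum_fin_two_mul_ite_lt {M : Type*} [AddCommMonoid M] (n : ℕ) (a b : M) :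
    ∑ i : Fin (2 * n), (if (i : ℕ) < n then a else b) = n • a + n • b := by
  rw [Fin.sum_univ_eq_sum_range (fun i => if i < n then a else b), two_mul,
    Finset.sum_range_add, Finset.sum_congr rfl fun i hi => if_pos (Finset.mem_range.mp hi)]
  simp

theorem isEqm_of_group_share {n : ℕ} (hn : 0 < n) {parts : Finset (Set ℝ)}
    {p s : Set ℝ → ℝ} {μ₁ μ₂ : ℝ} (hpos : ∀ C ∈ parts, 0 < lvol C) (hp : ∀ C ∈ parts, 0 ≤ p C)
    (hs : ∀ C ∈ parts, s C ∈ Icc 0 1)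
    (hbudget : ∑ C ∈ parts, p C * (s C * lvol C) = ∑ C ∈ parts, p C * ((1 - s C) * lvol C))
    (hμ₁ : 0 < μ₁) (hμ₂ : 0 < μ₂) (h₁ : IsCostEfficient parts ν₁ p μ₁ s)
    (h₂ : IsCostEfficient parts ν₂ p μ₂ fun C => 1 - s C) :
    IsEqm parts (κ n) (fun i => Vlin parts (νs n i)) p
      (fun i C => (if (i : ℕ) < n then s C else 1 - s C) * lvol C / n) := by
  have hn' : (0 : ℝ) < n := Nat.cast_pos.mpr hn
  have hincome : ∑ C ∈ parts, p C * lvol C = 2 * ∑ C ∈ parts, p C * (s C * lvol C) := by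
    rw [two_mul]
    nth_rw 2 [hbudget]
    rw [← Finset.sum_add_distrib]
    exact Finset.sum_congr rfl fun C _ => by ring
  refine isEqm_of_isCostEfficient (μ := fun i => if (i : ℕ) < n then μ₁ else μ₂)
    hpos hp (fun i C hC => ?_) (fun C _ => ?_) (fun i => ?_) (fun i => ?_) (fun i C hC => ?_)
  · have hshare : 0 ≤ if (i : ℕ) < n then s C else 1 - s C := by
      split_ifs
      exacts [(hs C hC).1, sub_nonneg.mpr (hs C hC).2]
    exact div_nonneg (mul_nonneg hshare (hpos C hC).le) hn'.le
  · rw [← Finset.sum_div, ← Finset.sum_mul, sum_fin_two_mul_ite_lt, ← nsmul_add,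
      add_sub_cancel, nsmul_one, mul_div_cancel_left₀ _ hn'.ne']
  · have hspent : ∑ C ∈ parts, p C * ((if (i : ℕ) < n then s C else 1 - s C) * lvol C)
        = ∑ C ∈ parts, p C * (s C * lvol C) := by
      split_ifs
      exacts [rfl, hbudget.symm]
    simp only [← mul_div_assoc, ← Finset.sum_div]
    rw [hspent, hincome, κ]
    field_simp
  · split_ifs <;> assumption
  · by_cases hi : (i : ℕ) < n
    · simpa only [νs, hi, if_true] using (h₁ C hC).imp_right (Or.imp_left fun h => by simp [h])
    · simpa only [νs, hi, if_false] using (h₂ C hC).imp_right (Or.imp_left fun h => by simp [h])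

theorem lvol_Icc_inter_Icc (a b c d : ℝ) :
    lvol (Icc a b ∩ Icc c d) = max (min b d - max a c) 0 := by
  rw [Icc_inter_Icc]
  exact Real.volume_real_Icc

theorem lvol_Ico_inter_Icc (a b c d : ℝ) :
    lvol (Ico a b ∩ Icc c d) = max (min b d - max a c) 0 := by
  rw [← lvol_Icc_inter_Icc]
  exact measureReal_congr (Ico_ae_eq_Icc.inter (ae_eq_refl _))

theorem lvol_A : lvol A = 1 / 4 := by
  norm_num [lvol, A]

theorem lvol_D : lvol D = 1 / 4 := by
  norm_num [lvol, D]

theorem ν₁_A : ν₁ A = 1 / 2 := by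
  norm_num [ν₁, A, lvol_Ico_inter_Icc]

theorem ν₂_A : ν₂ A = 0 := by
  norm_num [ν₂, A, lvol_Ico_inter_Icc]

theorem ν₁_D : ν₁ D = 0 := by
  norm_num [ν₁, D, lvol_Icc_inter_Icc]

theorem ν₂_D : ν₂ D = 1 / 2 := by
  norm_num [ν₂, D, lvol_Icc_inter_Icc]

/-- The set function with values `a`, `b`, `c`, `d` on the cells `A`, `Bt t`, `Ct t`, `D`, which
are told apart by their left endpoints. -/
def onCells (t a b c d : ℝ) (S : Set ℝ) : ℝ :=
  if 0 ∈ S then a else if 1 / 4 ∈ S then b else if (1 + 2 * t) / 4 ∈ S then c else d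

theorem onCells_A (t a b c d : ℝ) : onCells t a b c d A = a :=
  if_pos (by norm_num [A])

section Cells

variable {t : ℝ}

theorem lvol_Bt (h0 : 0 ≤ t) : lvol (Bt t) = t / 2 := by
  rw [lvol, Bt, Real.volume_Ico, ENNReal.toReal_ofReal] <;> linarith

theorem lvol_Ct (h1 : t ≤ 1) : lvol (Ct t) = (1 - t) / 2 := by
  rw [lvol, Ct, Real.volume_Ico, ENNReal.toReal_ofReal] <;> linarith

theorem ν₁_Bt (h0 : 0 ≤ t) : ν₁ (Bt t) = min t (1 / 2) := by
  rw [ν₁, Bt, lvol_Ico_inter_Icc]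
  simp only [min_def, max_def]
  split_ifs <;> linarith

theorem ν₁_Ct (h0 : 0 ≤ t) : ν₁ (Ct t) = 1 / 2 - ν₁ (Bt t) := by
  rw [ν₁_Bt h0, ν₁, Ct, lvol_Ico_inter_Icc]
  simp only [min_def, max_def]
  split_ifs <;> linarith

theorem ν₂_Ct (h1 : t ≤ 1) : ν₂ (Ct t) = min (1 / 2) (1 - t) := by
  rw [ν₂, Ct, lvol_Ico_inter_Icc]
  simp only [min_def, max_def]
  split_ifs <;> linarith

theorem ν₂_Bt (h1 : t ≤ 1) : ν₂ (Bt t) = 1 / 2 - ν₂ (Ct t) := by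
  rw [ν₂_Ct h1, ν₂, Bt, lvol_Ico_inter_Icc]
  simp only [min_def, max_def]
  split_ifs <;> linarith

theorem onCells_Bt (h0 : 0 < t) (a b c d : ℝ) : onCells t a b c d (Bt t) = b := by
  rw [onCells, if_neg (by norm_num [Bt]), if_pos ⟨le_rfl, by linarith⟩]

theorem onCells_Ct (ht : t ∈ Ioo (0 : ℝ) 1) (a b c d : ℝ) : onCells t a b c d (Ct t) = c := by
  obtain ⟨h0, h1⟩ := ht
  rw [onCells, if_neg fun h => by linarith [h.1], if_neg fun h => by linarith [h.1],
    if_pos ⟨le_rfl, by linarith⟩]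

theorem onCells_D (h1 : t < 1) (a b c d : ℝ) : onCells t a b c d D = d := by
  rw [onCells, if_neg (by norm_num [D]), if_neg (by norm_num [D]),
    if_neg fun h => by linarith [h.1]]

theorem forall_mem_partsT {P : Set ℝ → Prop} :
    (∀ C ∈ partsT t, P C) ↔ P A ∧ P (Bt t) ∧ P (Ct t) ∧ P D := by
  simp [partsT]

theorem sum_partsT {M : Type*} [AddCommMonoid M] (ht : t ∈ Ioo (0 : ℝ) 1) (f : Set ℝ → M) :
    ∑ C ∈ partsT t, f C = f A + (f (Bt t) + (f (Ct t) + f D)) := by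
  have distinct {S T : Set ℝ} (h : onCells t 0 1 2 3 S ≠ onCells t 0 1 2 3 T) : S ≠ T :=
    ne_of_apply_ne _ h
  have hA := onCells_A t 0 1 2 3
  have hB := onCells_Bt ht.1 0 1 2 3
  have hC := onCells_Ct ht 0 1 2 3
  have hD := onCells_D ht.2 0 1 2 3
  rw [partsT, Finset.sum_insert, Finset.sum_insert, Finset.sum_insert, Finset.sum_singleton] <;>
    simp only [Finset.mem_insert, Finset.mem_singleton, not_or]
  · exact distinct (by norm_num [hC, hD])
  · exact ⟨distinct (by norm_num [hB, hC]), distinct (by norm_num [hB, hD])⟩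
  · exact ⟨distinct (by norm_num [hA, hB]), distinct (by norm_num [hA, hC]),
      distinct (by norm_num [hA, hD])⟩

theorem lvol_pos_of_mem_partsT (ht : t ∈ Ioo (0 : ℝ) 1) : ∀ C ∈ partsT t, 0 < lvol C := by
  obtain ⟨h0, h1⟩ := ht
  rw [forall_mem_partsT, lvol_A, lvol_Bt h0.le, lvol_Ct h1.le, lvol_D]
  refine ⟨?_, ?_, ?_, ?_⟩ <;> linarith

end Cells

/-- The economy `E(π_t)` with `n` agents in each group has a competitive equilibrium with prices
`a`, `b`, `c` of `A`, `Bt t`, `Ct t`, normalized by giving `D` the price `1`. -/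
def HasEqmPrices (n : ℕ) (t a b c : ℝ) : Prop :=
  ∃ (p : Set ℝ → ℝ) (x : Fin (2 * n) → Set ℝ → ℝ),
    IsEqm (partsT t) (κ n) (fun i => Vlin (partsT t) (νs n i)) p x ∧
    p D = 1 ∧ p A = a ∧ p (Bt t) = b ∧ p (Ct t) = c

section Equilibria

variable {n : ℕ} {t a b c β γ u v r : ℝ}

theorem isCostEfficient_ν₁ (ht : t ∈ Ioo (0 : ℝ) 1) (hB : b * t = a * ν₁ (Bt t))
    (hC : a * ν₁ (Ct t) ≤ c * (1 - t)) (hγ : γ = 0 ∨ a * ν₁ (Ct t) = c * (1 - t)) :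
    IsCostEfficient (partsT t) ν₁ (onCells t a b c 1) (a / 2) (onCells t 1 β γ 0) := by
  obtain ⟨h0, h1⟩ := ht
  simp only [IsCostEfficient, forall_mem_partsT, onCells_A, onCells_Bt h0, onCells_Ct ⟨h0, h1⟩,
    onCells_D h1, lvol_A, lvol_Bt h0.le, lvol_Ct h1.le, lvol_D, ν₁_A, ν₁_D]
  exact ⟨⟨by linarith, .inr (by ring)⟩, ⟨by linarith, .inr (by linarith)⟩,
    ⟨by linarith, hγ.imp_right fun h => by linarith⟩, by norm_num⟩

theorem isCostEfficient_ν₂ (ht : t ∈ Ioo (0 : ℝ) 1) (ha : 0 ≤ a) (hB : ν₂ (Bt t) ≤ b * t)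
    (hC : c * (1 - t) = ν₂ (Ct t)) (hβ : β = 1 ∨ ν₂ (Bt t) = b * t) :
    IsCostEfficient (partsT t) ν₂ (onCells t a b c 1) (1 / 2)
      (fun C => 1 - onCells t 1 β γ 0 C) := by
  obtain ⟨h0, h1⟩ := ht
  simp only [IsCostEfficient, forall_mem_partsT, onCells_A, onCells_Bt h0, onCells_Ct ⟨h0, h1⟩,
    onCells_D h1, lvol_A, lvol_Bt h0.le, lvol_Ct h1.le, lvol_D, ν₂_A, ν₂_D]
  exact ⟨⟨by linarith, .inl (by ring)⟩,
    ⟨by linarith, hβ.imp (fun h => by linarith) fun h => by linarith⟩,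
    ⟨by linarith, .inr (by linarith)⟩, by norm_num⟩

/-- Group 1 buys `A` and the shares `β` of `Bt t` and `γ` of `Ct t`; a unit of utility costs
`a / 2` for group 1 and `1 / 2` for group 2. Prices and budgets are stated for doubled values, the
cell `Bt t` costing `b * t / 2` and `Ct t` costing `c * (1 - t) / 2`. -/
theorem hasEqmPrices_of_shares (hn : 0 < n) (ht : t ∈ Ioo (0 : ℝ) 1) (hu : ν₁ (Bt t) = u)
    (hv : ν₂ (Ct t) = v) (ha : 0 < a) (hb : 0 ≤ b) (hc : 0 ≤ c) (hβ : β ∈ Icc (0 : ℝ) 1)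
    (hγ : γ ∈ Icc (0 : ℝ) 1) (hB : b * t = a * u) (hC : c * (1 - t) = v)
    (hbudget : a / 2 + β * (a * u) + γ * v = (1 - β) * (a * u) + (1 - γ) * v + 1 / 2)
    (hC₁ : a * (1 / 2 - u) ≤ v) (hγ₁ : γ = 0 ∨ a * (1 / 2 - u) = v)
    (hB₂ : 1 / 2 - v ≤ a * u) (hβ₂ : β = 1 ∨ 1 / 2 - v = a * u) :
    HasEqmPrices n t a b c := by
  have ⟨h0, h1⟩ := ht
  rw [← hu] at hB
  rw [← hv] at hC
  rw [← hu, ← ν₁_Ct h0.le, ← hv, ← hC] at hC₁ hγ₁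
  rw [← hv, ← ν₂_Bt h1.le, ← hu, ← hB] at hB₂ hβ₂
  rw [← hv, ← hC, ← hu, ← hB] at hbudget
  refine ⟨onCells t a b c 1, _, isEqm_of_group_share (s := onCells t 1 β γ 0) hn
    (lvol_pos_of_mem_partsT ht) ?_ ?_ ?_ (half_pos ha) one_half_pos
    (isCostEfficient_ν₁ ht hB hC₁ hγ₁) (isCostEfficient_ν₂ ht ha.le hB₂ hC hβ₂),
    onCells_D h1 .., onCells_A .., onCells_Bt h0 .., onCells_Ct ht ..⟩
  · simpa only [forall_mem_partsT, onCells_A, onCells_Bt h0, onCells_Ct ht, onCells_D h1]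
      using ⟨ha.le, hb, hc, zero_le_one⟩
  · simpa only [forall_mem_partsT, onCells_A, onCells_Bt h0, onCells_Ct ht, onCells_D h1]
      using ⟨right_mem_Icc.mpr zero_le_one, hβ, hγ, left_mem_Icc.mpr zero_le_one⟩
  · simp only [sum_partsT ht, onCells_A, onCells_Bt h0, onCells_Ct ht, onCells_D h1, lvol_A,
      lvol_Bt h0.le, lvol_Ct h1.le, lvol_D]
    linarith

theorem hasEqmPrices_of_le_half (hn : 0 < n) (h0 : 0 < t) (h : t ≤ 1 / 2) (ha : 0 < a)
    (hγ : 0 ≤ γ) (hbudget : a * (1 / 2 + t) + γ = 1)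
    (hCt : a * (1 / 2 - t) ≤ 1 / 2) (hγt : γ = 0 ∨ a * (1 / 2 - t) = 1 / 2) :
    HasEqmPrices n t a a (1 / (2 * (1 - t))) := by
  have h1t : 0 < 1 - t := by linarith
  have hγ_le : γ ≤ 1 := by linarith [mul_pos ha (by linarith : 0 < 1 / 2 + t)]
  exact hasEqmPrices_of_shares (β := 1) hn ⟨h0, by linarith⟩
    ((ν₁_Bt h0.le).trans (min_eq_left h))
    ((ν₂_Ct (by linarith)).trans (min_eq_left (by linarith))) ha ha.le (by positivity) (by simp)
    ⟨hγ, hγ_le⟩ rfl (by field_simp) (by linarith) hCt hγt (by rw [sub_self]; positivity) (.inl rfl)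

theorem hasEqmPrices_of_half_le (hn : 0 < n) (h : 1 / 2 ≤ t) (h1 : t < 1) (ha : 0 < a)
    (hβ : β ≤ 1) (hbudget : a * β = 3 / 2 - t)
    (hBt : 2 * t - 1 ≤ a) (hβt : β = 1 ∨ 2 * t - 1 = a) :
    HasEqmPrices n t a (a / (2 * t)) 1 := by
  have h0 : 0 < t := by linarith
  have hβ_pos : 0 < β := pos_of_mul_pos_right (by linarith) ha.le
  exact hasEqmPrices_of_shares (γ := 0) hn ⟨h0, h1⟩
    ((ν₁_Bt h0.le).trans (min_eq_right h))
    ((ν₂_Ct h1.le).trans (min_eq_right (by linarith))) ha (by positivity) zero_le_one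
    ⟨hβ_pos.le, hβ⟩ (by simp) (by field_simp) (one_mul _) (by linarith) (by linarith) (.inl rfl)
    (by linarith) (hβt.imp_right fun h => by linarith)

theorem hasEqmPrices_of_le_one_sixth (hn : 0 < n) (h0 : 0 < t) (h : t ≤ 1 / 6) :
    HasEqmPrices n t (1 / (1 - 2 * t)) (1 / (1 - 2 * t)) (1 / (2 * (1 - t))) := by
  have h2t : 0 < 1 - 2 * t := by linarith
  have h6t : 0 ≤ 1 - 6 * t := by linarith
  have hindiff : 1 / (1 - 2 * t) * (1 / 2 - t) = 1 / 2 := by field_simp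
  refine hasEqmPrices_of_le_half (γ := (1 - 6 * t) / (2 * (1 - 2 * t))) hn h0 (by linarith)
    (by positivity) (by positivity) ?_ hindiff.le (.inr hindiff)
  field_simp
  ring

theorem hasEqmPrices_of_one_sixth_le (hn : 0 < n) (h : 1 / 6 ≤ t) (h' : t ≤ 1 / 2) :
    HasEqmPrices n t (2 / (1 + 2 * t)) (2 / (1 + 2 * t)) (1 / (2 * (1 - t))) := by
  have h2t : 0 < 1 + 2 * t := by linarith
  refine hasEqmPrices_of_le_half (γ := 0) hn (by linarith) h' (by positivity) le_rfl
    (by field_simp; ring) ?_ (.inl rfl)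
  rw [div_mul_eq_mul_div, div_le_iff₀ h2t]
  linarith

theorem hasEqmPrices_of_le_five_sixths (hn : 0 < n) (h : 1 / 2 ≤ t) (h' : t ≤ 5 / 6) :
    HasEqmPrices n t ((3 - 2 * t) / 2) ((3 - 2 * t) / (4 * t)) 1 := by
  have hb : (3 - 2 * t) / (4 * t) = (3 - 2 * t) / 2 / (2 * t) := by rw [div_div]; ring_nf
  rw [hb]
  exact hasEqmPrices_of_half_le hn h (by linarith) (by linarith) le_rfl (by ring)
    (by linarith) (.inl rfl)

theorem hasEqmPrices_of_five_sixths_le (hn : 0 < n) (h : 5 / 6 ≤ t) (h1 : t < 1) :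
    HasEqmPrices n t (2 * t - 1) ((2 * t - 1) / (2 * t)) 1 := by
  have h2t : 0 < 2 * t - 1 := by linarith
  have hβ : (3 - 2 * t) / (2 * (2 * t - 1)) ≤ 1 := by
    rw [div_le_one (by linarith)]
    linarith
  exact hasEqmPrices_of_half_le hn (by linarith) h1 h2t hβ (by field_simp) le_rfl (.inr rfl)

theorem exists_hasEqmPrices_of_mem_Icc (hn : 0 < n) (hr : r ∈ Icc (2 / 3 : ℝ) (3 / 2)) :
    ∃ t ∈ Ioo (0 : ℝ) 1, ∃ b c, HasEqmPrices n t r b c := by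
  obtain ⟨hr₁, hr₂⟩ := hr
  rcases le_total r 1 with h | h
  · have heqm := hasEqmPrices_of_le_five_sixths (t := 3 / 2 - r) hn (by linarith) (by linarith)
    rw [show (3 - 2 * (3 / 2 - r)) / 2 = r by ring] at heqm
    exact ⟨3 / 2 - r, ⟨by linarith, by linarith⟩, _, _, heqm⟩
  · have hr0 : 0 < r := by linarith
    have hinv₁ : 2 / 3 ≤ 1 / r := by rw [le_div_iff₀ hr0]; linarith
    have hinv₂ : 1 / r ≤ 1 := by rwa [div_le_one hr0]
    have heqm := hasEqmPrices_of_one_sixth_le (t := 1 / r - 1 / 2) hn (by linarith) (by linarith)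
    rw [show 2 / (1 + 2 * (1 / r - 1 / 2)) = r by ring_nf; field_simp] at heqm
    exact ⟨1 / r - 1 / 2, ⟨by linarith, by linarith⟩, _, _, heqm⟩

end Equilibria

/-- for every `t ∈ (0,1)` the economy `E(π_t)` has a competitive
equilibrium with `p_t(D) = 1` whose prices are given by the stated case-by-case
formulas; in particular the price ratio `p_t(A)/p_t(D)` takes every value in
`[2/3, 3/2]` as `t` ranges over `(0,1)`. -/
theorem equilibrium_prices (n : ℕ) (hn : 0 < n) :
    (∀ t ∈ Set.Ioo (0 : ℝ) 1,
      ∃ (p : Set ℝ → ℝ) (x : Fin (2 * n) → Set ℝ → ℝ),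
        IsEqm (partsT t) (κ n) (fun i => Vlin (partsT t) (νs n i)) p x ∧
        p D = 1 ∧
        (t ≤ 1/6 →
          p A = 1/(1 - 2*t) ∧ p (Bt t) = 1/(1 - 2*t) ∧ p (Ct t) = 1/(2*(1 - t))) ∧
        (1/6 < t → t ≤ 1/2 →
          p A = 2/(1 + 2*t) ∧ p (Bt t) = 2/(1 + 2*t) ∧ p (Ct t) = 1/(2*(1 - t))) ∧
        (1/2 ≤ t → t ≤ 5/6 →
          p A = (3 - 2*t)/2 ∧ p (Bt t) = (3 - 2*t)/(4*t) ∧ p (Ct t) = 1) ∧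
        (5/6 < t →
          p A = 2*t - 1 ∧ p (Bt t) = (2*t - 1)/(2*t) ∧ p (Ct t) = 1)) ∧
    (∀ r ∈ Set.Icc (2/3 : ℝ) (3/2),
      ∃ t ∈ Set.Ioo (0 : ℝ) 1, ∃ (p : Set ℝ → ℝ) (x : Fin (2 * n) → Set ℝ → ℝ),
        IsEqm (partsT t) (κ n) (fun i => Vlin (partsT t) (νs n i)) p x ∧
        p D = 1 ∧ p A / p D = r) := by
  refine ⟨fun t ⟨h0, h1⟩ => ?_, fun r hr => ?_⟩
  · rcases le_or_gt t (1 / 6) with h | h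
    · obtain ⟨p, x, hx, hD, hprices⟩ := hasEqmPrices_of_le_one_sixth hn h0 h
      exact ⟨p, x, hx, hD, fun _ => hprices, by grind, by grind, by grind⟩
    rcases lt_or_ge t (1 / 2) with h' | h'
    · obtain ⟨p, x, hx, hD, hprices⟩ := hasEqmPrices_of_one_sixth_le hn h.le h'.le
      exact ⟨p, x, hx, hD, by grind, fun _ _ => hprices, by grind, by grind⟩
    rcases le_or_gt t (5 / 6) with h'' | h''
    · obtain ⟨p, x, hx, hD, hprices⟩ := hasEqmPrices_of_le_five_sixths hn h' h''
      refine ⟨p, x, hx, hD, by grind, fun _ _ => ?_, fun _ _ => hprices, by grind⟩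
      obtain rfl : t = 1 / 2 := by linarith
      norm_num [hprices]
    · obtain ⟨p, x, hx, hD, hprices⟩ := hasEqmPrices_of_five_sixths_le hn h''.le h1
      exact ⟨p, x, hx, hD, by grind, by grind, by grind, fun _ => hprices⟩
  · obtain ⟨t, ht, b, c, p, x, hx, hD, hA, -⟩ := exists_hasEqmPrices_of_mem_Icc hn hr
    exact ⟨t, ht, p, x, hx, hD, by rw [hA, hD, div_one]⟩

end Stmt11

end
end
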